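/- For p ∈ ℕ, let K_p(x,y) = (1 + ⟨x,y⟩)^p be the finite polynomial kernel on ℝ^d, where ⟨·,·⟩ is the standard inner product on ℝ^d. For p, q ∈ ℕ: (a) there exists λ ≥ 0 such that λK_q − K_p is a positive semidefinite kernel on ℝ^d if and only if p ≤ q; (b) if p ≤ q, the least such λ equals 1. -/

import Mathlib

open scoped ComplexOrder

/-- A function `K : X × X → ℂ` is a positive semidefinite kernel if every finite
quadratic form `∑ j, ∑ k, c j * conj (c k) * K (x j) (x k)` is a nonnegative real number. -/
def IsPSDKernel {X : Type*} (K : X → X → ℂ) : Prop :=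
  ∀ (n : ℕ) (x : Fin n → X) (c : Fin n → ℂ),
    0 ≤ ∑ j, ∑ k, c j * (starRingEnd ℂ) (c k) * K (x j) (x k)

/-- The finite polynomial kernel `K_p(x,y) = (1 + ⟨x,y⟩)^p` on `ℝ^d`. -/
noncomputable def polyK (d p : ℕ) (x y : EuclideanSpace ℝ (Fin d)) : ℂ :=
  (((1 + (inner ℝ x y : ℝ)) ^ p : ℝ) : ℂ)

theorem IsPSDKernel.add' {X : Type*} {K L : X → X → ℂ} (hK : IsPSDKernel K)
    (hL : IsPSDKernel L) : IsPSDKernel (fun x y => K x y + L x y) := by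
  intro n x c
  have h := add_nonneg (hK n x c) (hL n x c)
  simpa only [mul_add, Finset.sum_add_distrib] using h

theorem IsPSDKernel.mul_inner {d : ℕ} {K : EuclideanSpace ℝ (Fin d) → EuclideanSpace ℝ (Fin d) → ℂ}
    (hK : IsPSDKernel K) : IsPSDKernel (fun x y => K x y * ((inner ℝ x y : ℝ) : ℂ)) := by
  intro n x c
  have h : 0 ≤ ∑ i : Fin d, ∑ j, ∑ k, (c j * ((x j i : ℝ) : ℂ)) *
      (starRingEnd ℂ) (c k * ((x k i : ℝ) : ℂ)) * K (x j) (x k) :=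
    Finset.sum_nonneg fun i _ => hK n x (fun j => c j * ((x j i : ℝ) : ℂ))
  convert h using 1
  symm
  rw [Finset.sum_comm]
  refine Finset.sum_congr rfl fun j _ => ?_
  rw [Finset.sum_comm]
  refine Finset.sum_congr rfl fun k _ => ?_
  beta_reduce
  rw [PiLp.inner_apply]
  push_cast
  rw [Finset.mul_sum, Finset.mul_sum]
  refine Finset.sum_congr rfl fun i _ => ?_
  simp
  ring

theorem polyK_psd (d p : ℕ) : IsPSDKernel (polyK d p) := by
  induction p with
  | zero =>
    intro n x c
    have h : ∑ j, ∑ k, c j * (starRingEnd ℂ) (c k) * polyK d 0 (x j) (x k)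
        = (∑ j, c j) * (starRingEnd ℂ) (∑ j, c j) := by
      simp [polyK, Finset.sum_mul_sum]
    rw [h]
    exact mul_star_self_nonneg (∑ j, c j)
  | succ p ih =>
    have h := ih.add' ih.mul_inner
    convert h using 3 with x y
    simp only [polyK]
    push_cast
    ring

theorem polyK_sub_psd (d p m : ℕ) :
    IsPSDKernel (fun x y => polyK d (p + m) x y - polyK d p x y) := by
  induction m with
  | zero => intro n x c; simp
  | succ m ih =>
    have h := ih.add' (polyK_psd d (p + m)).mul_inner
    convert h using 3 with x y
    simp only [polyK]
    push_cast
    ring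

theorem polyK_diag {d p q : ℕ} {lam : ℝ}
    (h : IsPSDKernel (fun x y : EuclideanSpace ℝ (Fin d) =>
          (lam : ℂ) * polyK d q x y - polyK d p x y)) (x : EuclideanSpace ℝ (Fin d)) :
    (1 + ‖x‖ ^ 2) ^ p ≤ lam * (1 + ‖x‖ ^ 2) ^ q := by
  have h1 := h 1 (fun _ => x) (fun _ => 1)
  simp only [polyK, real_inner_self_eq_norm_sq, Finset.univ_unique, Finset.sum_singleton,
    map_one, one_mul] at h1
  norm_cast at h1
  linarith

/-- (a) Some `λ ≥ 0` makes `λK_q − K_p` positive semidefinite iff `p ≤ q`;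
(b) if `p ≤ q` then the least such `λ` equals `1`. -/
theorem polyKernel_inclusion (d : ℕ) (hd : 0 < d) (p q : ℕ) :
    ((∃ lam : ℝ, 0 ≤ lam ∧
        IsPSDKernel (fun x y : EuclideanSpace ℝ (Fin d) =>
          (lam : ℂ) * polyK d q x y - polyK d p x y)) ↔ p ≤ q) ∧
    (p ≤ q →
      IsLeast {lam : ℝ | 0 ≤ lam ∧
          IsPSDKernel (fun x y : EuclideanSpace ℝ (Fin d) =>
            (lam : ℂ) * polyK d q x y - polyK d p x y)} 1) := by
  refine ⟨⟨?_, fun hpq => ?_⟩, fun hpq => ⟨⟨zero_le_one, ?_⟩, ?_⟩⟩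
  · rintro ⟨lam, hl, h⟩
    by_contra! hlt
    have h1 := polyK_diag h (EuclideanSpace.single (⟨0, hd⟩ : Fin d) (√lam))
    rw [EuclideanSpace.norm_single, Real.norm_eq_abs, sq_abs, Real.sq_sqrt hl] at h1
    have h2 : (1 + lam) ^ (q + 1) ≤ (1 + lam) ^ p := pow_le_pow_right₀ (by linarith) hlt
    have h3 : 0 < (1 + lam) ^ q := by positivity
    rw [pow_succ] at h2
    nlinarith
  · obtain ⟨m, rfl⟩ := Nat.exists_eq_add_of_le hpq
    exact ⟨1, zero_le_one, by simpa using polyK_sub_psd d p m⟩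
  · obtain ⟨m, rfl⟩ := Nat.exists_eq_add_of_le hpq
    simpa using polyK_sub_psd d p m
  · rintro lam ⟨_, h⟩
    simpa using polyK_diag h 0
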